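/- arXiv:2510.02156 — 3 statements merged into one kernel-verified Lean document; each statement's English description precedes it below -/
import Mathlib

section
/- Let r, n be positive integers, B ∈ ℝ^{r×n}, c ∈ ℝ^r, and λ̃ > 0. Let x, x⋆ ∈ ℝ^n with B x⋆ = c, and let x' = x + Bᵀ (B Bᵀ + λ̃ I_r)⁻¹ (c − B x). Then x' − x⋆ = λ̃ (Bᵀ B + λ̃ I_n)⁻¹ (x − x⋆). -/
open Matrix

/-!
Since `c = B x⋆`, one step multiplies the error `x − x⋆` by `1 − Bᵀ (B Bᵀ + λ̃)⁻¹ B`. The identity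
`(Bᵀ B + λ̃) Bᵀ = Bᵀ (B Bᵀ + λ̃)` moves the inverse to the left of `Bᵀ`, turning this matrix into
`1 − (Bᵀ B + λ̃)⁻¹ Bᵀ B = λ̃ (Bᵀ B + λ̃)⁻¹`.
-/

section PushThrough

variable {R m n : Type*} [CommRing R] [Fintype m] [Fintype n] [DecidableEq m] [DecidableEq n]
  (U : Matrix n m R) (V : Matrix m n R) (μ : R)

theorem mul_add_smul_one_mul_comm :
    (U * V + μ • (1 : Matrix n n R)) * U = U * (V * U + μ • (1 : Matrix m m R)) := by
  simp only [Matrix.add_mul, Matrix.mul_add, Matrix.mul_assoc, Matrix.smul_mul, Matrix.mul_smul,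
    Matrix.one_mul, Matrix.mul_one]

variable {U V μ}

theorem mul_inv_mul_add_smul_one_comm
    (hVU : IsUnit (V * U + μ • (1 : Matrix m m R)))
    (hUV : IsUnit (U * V + μ • (1 : Matrix n n R))) :
    U * (V * U + μ • (1 : Matrix m m R))⁻¹ = (U * V + μ • (1 : Matrix n n R))⁻¹ * U := by
  have := hVU.invertible
  have := hUV.invertible
  rw [mul_inv_eq_iff_eq_mul_of_invertible, Matrix.mul_assoc, ← mul_add_smul_one_mul_comm,
    inv_mul_cancel_left_of_invertible]

theorem one_sub_mul_inv_mul_add_smul_one_mul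
    (hVU : IsUnit (V * U + μ • (1 : Matrix m m R)))
    (hUV : IsUnit (U * V + μ • (1 : Matrix n n R))) :
    1 - U * (V * U + μ • (1 : Matrix m m R))⁻¹ * V = μ • (U * V + μ • (1 : Matrix n n R))⁻¹ := by
  set N := U * V + μ • (1 : Matrix n n R) with hN
  have hdet : IsUnit N.det := (isUnit_iff_isUnit_det N).mp hUV
  calc 1 - U * (V * U + μ • (1 : Matrix m m R))⁻¹ * V
      = N⁻¹ * N - N⁻¹ * (U * V) := by
        rw [mul_inv_mul_add_smul_one_comm hVU hUV, nonsing_inv_mul N hdet, Matrix.mul_assoc]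
    _ = N⁻¹ * (μ • 1) := by rw [← Matrix.mul_sub, hN, add_sub_cancel_left]
    _ = μ • N⁻¹ := by rw [Matrix.mul_smul, Matrix.mul_one]

theorem stmt_7_general {c : m → R} {x xs : n → R}
    (hVU : IsUnit (V * U + μ • (1 : Matrix m m R)))
    (hUV : IsUnit (U * V + μ • (1 : Matrix n n R)))
    (hxs : V *ᵥ xs = c) :
    (x + U *ᵥ ((V * U + μ • (1 : Matrix m m R))⁻¹ *ᵥ (c - V *ᵥ x))) - xs =
      μ • ((U * V + μ • (1 : Matrix n n R))⁻¹ *ᵥ (x - xs)) := by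
  set M := V * U + μ • (1 : Matrix m m R)
  calc (x + U *ᵥ (M⁻¹ *ᵥ (c - V *ᵥ x))) - xs
      = (1 - U * M⁻¹ * V) *ᵥ (x - xs) := by
        simp only [← hxs, sub_mulVec, one_mulVec, mulVec_sub, mulVec_mulVec, Matrix.mul_assoc]
        abel
    _ = μ • ((U * V + μ • (1 : Matrix n n R))⁻¹ *ᵥ (x - xs)) := by
        rw [one_sub_mul_inv_mul_add_smul_one_mul hVU hUV, smul_mulVec]

end PushThrough

theorem posDef_conjTranspose_mul_self_add_smul_one {α R m n : Type*}
    [Ring R] [PartialOrder R] [StarRing R] [StarOrderedRing R] [NoZeroDivisors R]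
    [CommSemiring α] [PartialOrder α] [StarRing α] [StarOrderedRing α]
    [Algebra α R] [StarModule α R] [PosSMulStrictMono α R] [Fintype m] [Finite n] [DecidableEq n]
    (A : Matrix m n R) {μ : α} (hμ : 0 < μ) :
    (Aᴴ * A + μ • (1 : Matrix n n R)).PosDef :=
  PosDef.posSemidef_add (posSemidef_conjTranspose_mul_self A) (PosDef.one.smul hμ)

/-- Exact error-propagation identity for the regularized block-Kaczmarz update:
if `B x⋆ = c` and `x' = x + Bᵀ (B Bᵀ + λ̃ I)⁻¹ (c − B x)`, then
`x' − x⋆ = λ̃ (Bᵀ B + λ̃ I)⁻¹ (x − x⋆)`. -/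
theorem stmt_7 (r n : ℕ) (hr : 0 < r) (hn : 0 < n)
    (B : Matrix (Fin r) (Fin n) ℝ) (c : Fin r → ℝ) (lam : ℝ) (hlam : 0 < lam)
    (x xs : Fin n → ℝ) (hxs : B *ᵥ xs = c) :
    (x + Bᵀ *ᵥ ((B * Bᵀ + lam • (1 : Matrix (Fin r) (Fin r) ℝ))⁻¹ *ᵥ (c - B *ᵥ x))) - xs =
      lam • ((Bᵀ * B + lam • (1 : Matrix (Fin n) (Fin n) ℝ))⁻¹ *ᵥ (x - xs)) :=
  stmt_7_general
    (by simpa using (posDef_conjTranspose_mul_self_add_smul_one Bᵀ hlam).isUnit)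
    (by simpa using (posDef_conjTranspose_mul_self_add_smul_one B hlam).isUnit) hxs
end

section
/- Let r, n be positive integers, B ∈ ℝ^{r×n}, c ∈ ℝ^r, and λ̃ > 0. Let x, x⋆ ∈ ℝ^n with B x⋆ = c, and let x' = x + Bᵀ (B Bᵀ + λ̃ I_r)⁻¹ (c − B x). Suppose μ > 0 is such that ⟨v, Bᵀ B v⟩ ≥ μ ‖v‖₂² for every v orthogonal to the kernel of B, and suppose x − x⋆ is orthogonal to the kernel of B. Then ‖x' − x⋆‖₂ ≤ (λ̃ / (μ + λ̃)) · ‖x − x⋆‖₂. -/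
open Matrix

/-!
Write `d = x - x⋆` and `e = x' - x⋆`. The push-through identity `B (BᵀB + λ̃) = (BBᵀ + λ̃) B` turns
the update into `(BᵀB + λ̃) e = λ̃ d`. Since `e - d` lies in the range of `Bᵀ`, the new error `e`
stays orthogonal to `ker B`, where `BᵀB + λ̃` is bounded below by `μ + λ̃`; Cauchy-Schwarz applied
to `⟪e, (BᵀB + λ̃) e⟫ = λ̃ ⟪e, d⟫` then gives `(μ + λ̃) ‖e‖ ≤ λ̃ ‖d‖`.
-/

section Module

variable {R E F : Type*} [Semiring R] [AddCommGroup E] [AddCommGroup F] [Module R E] [Module R F]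

theorem regularized_push_through (A : E →ₗ[R] F) (A' : F →ₗ[R] E) {lam : R}
    {d : E} {y : F} (hy : A (A' y) + lam • y = -A d) :
    A' (A (d + A' y)) + lam • (d + A' y) = lam • d := by
  have apply_error : A (d + A' y) = -(lam • y) := by
    rw [map_add, ← neg_eq_iff_eq_neg.mpr hy]
    abel
  rw [apply_error, map_neg, map_smul, smul_add]
  abel

end Module

section InnerProductSpace

open RCLike
open scoped InnerProductSpace

variable {𝕜 E F : Type*} [RCLike 𝕜] [NormedAddCommGroup E] [InnerProductSpace 𝕜 E]
  [SeminormedAddCommGroup F] [InnerProductSpace 𝕜 F]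

theorem mul_norm_le_norm_of_mul_norm_sq_le_re_inner {V : Type*} [SeminormedAddCommGroup V]
    [InnerProductSpace 𝕜 V] {κ : ℝ} {u v : V}
    (h : κ * ‖u‖ ^ 2 ≤ re ⟪u, v⟫_𝕜) : κ * ‖u‖ ≤ ‖v‖ := by
  rcases (norm_nonneg u).eq_or_lt with hu | hu
  · simp [← hu]
  · refine le_of_mul_le_mul_left ?_ hu
    calc ‖u‖ * (κ * ‖u‖) = κ * ‖u‖ ^ 2 := by ring
      _ ≤ re ⟪u, v⟫_𝕜 := h
      _ ≤ ‖u‖ * ‖v‖ := re_inner_le_norm u v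

variable {A : E →ₗ[𝕜] F} {A' : F →ₗ[𝕜] E} (hadj : ∀ v y, ⟪A v, y⟫_𝕜 = ⟪v, A' y⟫_𝕜)
include hadj

theorem adjoint_apply_mem_orthogonal_ker (y : F) : A' y ∈ A.kerᗮ := by
  intro w hw
  rw [← hadj, LinearMap.mem_ker.mp hw, inner_zero_left]

theorem add_mul_norm_le_norm_adjoint_comp_apply_add_smul {lam μ : ℝ} {v : E}
    (hv : μ * ‖v‖ ^ 2 ≤ ‖A v‖ ^ 2) :
    (μ + lam) * ‖v‖ ≤ ‖A' (A v) + (lam : 𝕜) • v‖ := by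
  refine mul_norm_le_norm_of_mul_norm_sq_le_re_inner (𝕜 := 𝕜) ?_
  calc (μ + lam) * ‖v‖ ^ 2 ≤ ‖A v‖ ^ 2 + lam * ‖v‖ ^ 2 := by linarith
    _ = re ⟪v, A' (A v) + (lam : 𝕜) • v⟫_𝕜 := by
      rw [inner_add_right, ← hadj, inner_smul_right, map_add, re_ofReal_mul,
        inner_self_eq_norm_sq, inner_self_eq_norm_sq]

-- `y` plays the role of `(A A' + lam)⁻¹ (c - A x)`.
theorem stmt_9_general {lam μ : ℝ} (hlam : 0 ≤ lam) (hμ : 0 < μ + lam)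
    (hA : ∀ v ∈ A.kerᗮ, μ * ‖v‖ ^ 2 ≤ ‖A v‖ ^ 2) {x xs : E} {c y : F} (hxs : A xs = c)
    (hy : A (A' y) + (lam : 𝕜) • y = c - A x) (hperp : x - xs ∈ A.kerᗮ) :
    ‖x + A' y - xs‖ ≤ lam / (μ + lam) * ‖x - xs‖ := by
  have error_eq : x + A' y - xs = x - xs + A' y := by abel
  have error_mem : x - xs + A' y ∈ A.kerᗮ :=
    add_mem hperp (adjoint_apply_mem_orthogonal_ker hadj y)
  have hy' : A (A' y) + (lam : 𝕜) • y = -A (x - xs) := by rw [hy, map_sub, hxs, neg_sub]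
  rw [error_eq, div_mul_eq_mul_div, le_div_iff₀' hμ]
  calc (μ + lam) * ‖x - xs + A' y‖
      ≤ ‖A' (A (x - xs + A' y)) + (lam : 𝕜) • (x - xs + A' y)‖ :=
        add_mul_norm_le_norm_adjoint_comp_apply_add_smul hadj (hA _ error_mem)
    _ = ‖(lam : 𝕜) • (x - xs)‖ := by rw [regularized_push_through A A' hy']
    _ = lam * ‖x - xs‖ := by rw [norm_smul, norm_of_nonneg hlam]

end InnerProductSpace

section Matrix

open WithLp
open scoped ComplexOrder InnerProductSpace

variable {𝕜 m n : Type*} [RCLike 𝕜] [Fintype n]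

theorem toLp_mem_orthogonal_ker_toEuclideanLin_iff [DecidableEq n] {B : Matrix m n 𝕜}
    {v : n → 𝕜} :
    toLp 2 v ∈ B.toEuclideanLin.kerᗮ ↔ ∀ w, B *ᵥ w = 0 → v ⬝ᵥ star w = 0 := by
  simp [Submodule.mem_orthogonal, (toLp_surjective 2).forall, EuclideanSpace.inner_toLp_toLp]

variable [Fintype m]

theorem star_dotProduct_conjTranspose_mul_self_mulVec (B : Matrix m n 𝕜) (v : n → 𝕜) :
    star v ⬝ᵥ ((Bᴴ * B) *ᵥ v) = (‖toLp 2 (B *ᵥ v)‖ : 𝕜) ^ 2 := by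
  rw [← inner_self_eq_norm_sq_to_K, EuclideanSpace.inner_toLp_toLp, ← mulVec_mulVec,
    dotProduct_mulVec, ← star_mulVec, dotProduct_comm]

theorem mul_norm_sq_le_norm_toEuclideanLin_apply_sq [DecidableEq n] {B : Matrix m n 𝕜} {μ : ℝ}
    (hB : ∀ v : n → 𝕜, (∀ w, B *ᵥ w = 0 → v ⬝ᵥ star w = 0) →
      μ * ‖toLp 2 v‖ ^ 2 ≤ RCLike.re (star v ⬝ᵥ ((Bᴴ * B) *ᵥ v))) :
    ∀ v ∈ B.toEuclideanLin.kerᗮ, μ * ‖v‖ ^ 2 ≤ ‖B.toEuclideanLin v‖ ^ 2 := by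
  rintro ⟨v⟩ hv
  have rayleigh_bound := hB v (toLp_mem_orthogonal_ker_toEuclideanLin_iff.mp hv)
  rw [star_dotProduct_conjTranspose_mul_self_mulVec] at rayleigh_bound
  exact_mod_cast rayleigh_bound

variable [DecidableEq m]

theorem inner_toEuclideanLin_left [DecidableEq n] (B : Matrix m n 𝕜) (v : EuclideanSpace 𝕜 n)
    (y : EuclideanSpace 𝕜 m) :
    ⟪B.toEuclideanLin v, y⟫_𝕜 = ⟪v, Bᴴ.toEuclideanLin y⟫_𝕜 := by
  rw [toEuclideanLin_conjTranspose_eq_adjoint, LinearMap.adjoint_inner_right]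

theorem isUnit_mul_conjTranspose_self_add_smul_one (B : Matrix m n 𝕜) {lam : 𝕜}
    (hlam : 0 < lam) : IsUnit (B * Bᴴ + lam • (1 : Matrix m m 𝕜)) :=
  (PosDef.posSemidef_add (posSemidef_self_mul_conjTranspose B) (PosDef.one.smul hlam)).isUnit

theorem regularized_inv_mulVec_solves (B : Matrix m n 𝕜) {lam : 𝕜} (hlam : 0 < lam) (b : m → 𝕜) :
    B *ᵥ (Bᴴ *ᵥ ((B * Bᴴ + lam • (1 : Matrix m m 𝕜))⁻¹ *ᵥ b)) +
      lam • ((B * Bᴴ + lam • (1 : Matrix m m 𝕜))⁻¹ *ᵥ b) = b := by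
  set M := B * Bᴴ + lam • (1 : Matrix m m 𝕜) with hM
  have hdet : IsUnit M.det :=
    (isUnit_iff_isUnit_det M).mp (isUnit_mul_conjTranspose_self_add_smul_one B hlam)
  calc B *ᵥ (Bᴴ *ᵥ (M⁻¹ *ᵥ b)) + lam • (M⁻¹ *ᵥ b) = M *ᵥ (M⁻¹ *ᵥ b) := by
        rw [hM, add_mulVec, smul_mulVec, one_mulVec, mulVec_mulVec _ B]
    _ = b := by rw [mulVec_mulVec, mul_nonsing_inv M hdet, one_mulVec]

end Matrix

/-- One-step contraction bound of Theorem 2.3: if `B x⋆ = c`,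
`x' = x + Bᵀ (B Bᵀ + λ̃ I)⁻¹ (c − B x)`, `μ > 0` is a lower bound for the Rayleigh
quotient of `Bᵀ B` on the orthogonal complement of the kernel of `B`, and `x − x⋆`
is orthogonal to the kernel of `B`, then
`‖x' − x⋆‖₂ ≤ (λ̃ / (μ + λ̃)) ‖x − x⋆‖₂`. -/
theorem stmt_9 (r n : ℕ) (hr : 0 < r) (hn : 0 < n)
    (B : Matrix (Fin r) (Fin n) ℝ) (c : Fin r → ℝ) (lam : ℝ) (hlam : 0 < lam)
    (x xs : Fin n → ℝ) (hxs : B *ᵥ xs = c)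
    (μ : ℝ) (hμ : 0 < μ)
    (hmu : ∀ v : Fin n → ℝ, (∀ w : Fin n → ℝ, B *ᵥ w = 0 → v ⬝ᵥ w = 0) →
      v ⬝ᵥ ((Bᵀ * B) *ᵥ v) ≥ μ * ‖(EuclideanSpace.equiv (Fin n) ℝ).symm v‖ ^ 2)
    (hperp : ∀ w : Fin n → ℝ, B *ᵥ w = 0 → (x - xs) ⬝ᵥ w = 0) :
    ‖(EuclideanSpace.equiv (Fin n) ℝ).symm
        ((x + Bᵀ *ᵥ ((B * Bᵀ + lam • (1 : Matrix (Fin r) (Fin r) ℝ))⁻¹ *ᵥ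
          (c - B *ᵥ x))) - xs)‖ ≤
      (lam / (μ + lam)) * ‖(EuclideanSpace.equiv (Fin n) ℝ).symm (x - xs)‖ := by
  exact stmt_9_general (x := WithLp.toLp 2 x) (xs := WithLp.toLp 2 xs) (c := WithLp.toLp 2 c)
    (y := WithLp.toLp 2 ((B * Bᵀ + lam • (1 : Matrix (Fin r) (Fin r) ℝ))⁻¹ *ᵥ (c - B *ᵥ x)))
    (inner_toEuclideanLin_left B) hlam.le (add_pos hμ hlam)
    (mul_norm_sq_le_norm_toEuclideanLin_apply_sq hmu) (congrArg (WithLp.toLp 2) hxs)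
    (congrArg (WithLp.toLp 2) (regularized_inv_mulVec_solves B hlam (c - B *ᵥ x)))
    (toLp_mem_orthogonal_ker_toEuclideanLin_iff.mpr hperp)
end

section
/- Let r, n be positive integers, B ∈ ℝ^{r×n}, and let P ∈ ℝ^{n×r} satisfy the four Penrose conditions: B P B = B, P B P = P, (B P)ᵀ = B P, and (P B)ᵀ = P B. Let c ∈ ℝ^r and x, x⋆ ∈ ℝ^n with B x⋆ = c, and let x' = x + P (c − B x). Suppose μ > 0 is such that ‖B v‖₂² ≥ μ ‖v‖₂² for every v in the range of Bᵀ. Then ‖x' − x⋆‖₂² ≥ ‖x − x⋆‖₂² − ‖B x − c‖₂² / μ. -/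
open Matrix

/-!
With `d = x - x⋆` and `Π = P B`, the new error is `x' - x⋆ = d - Π d`. Since `Π` is the orthogonal
projection onto `(ker B)ᗮ`, Pythagoras gives `‖d - Π d‖² = ‖d‖² - ‖Π d‖²`, and the spectral bound
applied to `Π d`, together with `B (Π d) = B d`, gives `μ ‖Π d‖² ≤ ‖B d‖²`.
-/

section LinearMap

variable {𝕜 E F : Type*} [RCLike 𝕜] [NormedAddCommGroup E] [InnerProductSpace 𝕜 E]

theorem norm_sub_apply_sq_of_isSymmetricProjection {p : E →ₗ[𝕜] E}
    (hp : p.IsSymmetricProjection) (x : E) : ‖x - p x‖ ^ 2 = ‖x‖ ^ 2 - ‖p x‖ ^ 2 := by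
  have inner_apply : inner 𝕜 x (p x) = inner 𝕜 (p x) (p x) := by
    rw [hp.isSymmetric x (p x), ← Module.End.mul_apply, hp.isIdempotentElem.eq]
  rw [norm_sub_sq (𝕜 := 𝕜), inner_apply, inner_self_eq_norm_sq]
  ring

theorem isSymmetricProjection_comp_of_comp_comp_eq [AddCommGroup F] [Module 𝕜 F]
    {B : E →ₗ[𝕜] F} {P : F →ₗ[𝕜] E} (hBPB : B ∘ₗ P ∘ₗ B = B) (hPB : (P ∘ₗ B).IsSymmetric) :
    (P ∘ₗ B).IsSymmetricProjection where
  isIdempotentElem := congrArg (P ∘ₗ ·) hBPB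
  isSymmetric := hPB

theorem apply_apply_mem_orthogonal_ker [AddCommGroup F] [Module 𝕜 F]
    {B : E →ₗ[𝕜] F} {P : F →ₗ[𝕜] E} (hPB : (P ∘ₗ B).IsSymmetric) (x : E) :
    P (B x) ∈ B.kerᗮ := by
  intro k hk
  calc inner 𝕜 k (P (B x)) = inner 𝕜 (P (B k)) x := (hPB k x).symm
    _ = 0 := by rw [LinearMap.mem_ker.mp hk, map_zero, inner_zero_left]

/-- Here `P` is any `{1,4}`-inverse of `B`, and `B.kerᗮ` takes the place of the range of `Bᵀ`. -/
theorem stmt_13_general [SeminormedAddCommGroup F] [Module 𝕜 F]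
    {B : E →ₗ[𝕜] F} {P : F →ₗ[𝕜] E} (hBPB : B ∘ₗ P ∘ₗ B = B) (hPB : (P ∘ₗ B).IsSymmetric)
    {c : F} {x xs : E} (hxs : B xs = c) {μ : ℝ} (hμ : 0 < μ)
    (hmu : ∀ v ∈ B.kerᗮ, μ * ‖v‖ ^ 2 ≤ ‖B v‖ ^ 2) :
    ‖x - xs‖ ^ 2 - ‖B x - c‖ ^ 2 / μ ≤ ‖x + P (c - B x) - xs‖ ^ 2 := by
  have residual : B x - c = B (x - xs) := by rw [map_sub, hxs]
  have error : x + P (c - B x) - xs = (x - xs) - (P ∘ₗ B) (x - xs) := by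
    rw [← neg_sub (B x) c, residual, map_neg, LinearMap.comp_apply]
    abel
  have projection_bound : ‖(P ∘ₗ B) (x - xs)‖ ^ 2 ≤ ‖B (x - xs)‖ ^ 2 / μ := by
    rw [le_div_iff₀' hμ]
    calc μ * ‖(P ∘ₗ B) (x - xs)‖ ^ 2 ≤ ‖B (P (B (x - xs)))‖ ^ 2 :=
          hmu _ (apply_apply_mem_orthogonal_ker hPB _)
      _ = ‖B (x - xs)‖ ^ 2 := congrArg (‖·‖ ^ 2) (LinearMap.congr_fun hBPB (x - xs))
  rw [error, residual,
    norm_sub_apply_sq_of_isSymmetricProjection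
      (isSymmetricProjection_comp_of_comp_comp_eq hBPB hPB)]
  exact sub_le_sub_left projection_bound _

end LinearMap

section Matrix

variable {𝕜 m n : Type*} [RCLike 𝕜] [Fintype m] [Fintype n] [DecidableEq n]

theorem toEuclideanLin_comp_comp_eq_self [DecidableEq m]
    {B : Matrix m n 𝕜} {P : Matrix n m 𝕜} (h : B * P * B = B) :
    B.toEuclideanLin ∘ₗ P.toEuclideanLin ∘ₗ B.toEuclideanLin = B.toEuclideanLin := by
  rw [← toLpLin_mul_same, ← toLpLin_mul_same, ← Matrix.mul_assoc, h]

theorem isSymmetric_toEuclideanLin_comp [DecidableEq m]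
    {B : Matrix m n 𝕜} {P : Matrix n m 𝕜} (h : (P * B).IsHermitian) :
    (P.toEuclideanLin ∘ₗ B.toEuclideanLin).IsSymmetric := by
  rw [← toLpLin_mul_same]
  exact isSymmetric_toEuclideanLin_iff.mpr h

theorem ofLp_mem_range_conjTranspose_mulVec {B : Matrix m n 𝕜} {v : EuclideanSpace 𝕜 n}
    (hv : v ∈ B.toEuclideanLin.kerᗮ) : v.ofLp ∈ Set.range Bᴴ.mulVec := by
  classical
  rw [LinearMap.orthogonal_ker, ← toEuclideanLin_conjTranspose_eq_adjoint] at hv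
  obtain ⟨w, rfl⟩ := hv
  exact ⟨w.ofLp, rfl⟩

end Matrix

/-- Lower bound in equation (2.15): for the pseudoinverse update `x' = x + P (c − B x)`
with `B x⋆ = c`, if `μ > 0` satisfies `‖B v‖₂² ≥ μ ‖v‖₂²` for every `v` in the range of
`Bᵀ`, then `‖x' − x⋆‖₂² ≥ ‖x − x⋆‖₂² − ‖B x − c‖₂² / μ`. -/
theorem stmt_13 (r n : ℕ) (hr : 0 < r) (hn : 0 < n)
    (B : Matrix (Fin r) (Fin n) ℝ) (P : Matrix (Fin n) (Fin r) ℝ)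
    (h1 : B * P * B = B) (h2 : P * B * P = P)
    (h3 : (B * P)ᵀ = B * P) (h4 : (P * B)ᵀ = P * B)
    (c : Fin r → ℝ) (x xs : Fin n → ℝ) (hxs : B *ᵥ xs = c)
    (μ : ℝ) (hμ : 0 < μ)
    (hmu : ∀ v ∈ Set.range Bᵀ.mulVec,
      ‖(EuclideanSpace.equiv (Fin r) ℝ).symm (B *ᵥ v)‖ ^ 2 ≥
        μ * ‖(EuclideanSpace.equiv (Fin n) ℝ).symm v‖ ^ 2) :
    ‖(EuclideanSpace.equiv (Fin n) ℝ).symm ((x + P *ᵥ (c - B *ᵥ x)) - xs)‖ ^ 2 ≥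
      ‖(EuclideanSpace.equiv (Fin n) ℝ).symm (x - xs)‖ ^ 2 -
        ‖(EuclideanSpace.equiv (Fin r) ℝ).symm (B *ᵥ x - c)‖ ^ 2 / μ :=
  -- Over `ℝ`, `ᴴ` unfolds to `ᵀ`, and `(EuclideanSpace.equiv _ ℝ).symm` to `WithLp.toLp 2`.
  stmt_13_general (toEuclideanLin_comp_comp_eq_self h1) (isSymmetric_toEuclideanLin_comp h4)
    (congrArg (WithLp.toLp 2) hxs) hμ fun v hv ↦ hmu v (ofLp_mem_range_conjTranspose_mulVec hv)
end
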